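/- Let n ≥ 1 and let f : ℝ^{2n+1} → ℝ^{2n+1} be a diffeomorphism that is connected to the identity by a smooth path of diffeomorphisms. Then there exists a positive smooth path of diffeomorphisms (g_t)_{t∈[0,1]} of ℝ^{2n+1} with g_0 = id and g_1 = f. -/

import Mathlib

open Set Function

noncomputable section

/-- `ℝ^{2n+1}` with coordinates `(x, y, z) ∈ ℝⁿ × ℝⁿ × ℝ`. -/
abbrev E (n : ℕ) : Type := (Fin n → ℝ) × (Fin n → ℝ) × ℝ

/-- The standard contact form `α₀ = dz + ∑ xᵢ dyᵢ`: at the point `p = (x,y,z)` it sends the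
vector `v = (u,w,c)` to `c + ∑ xᵢ wᵢ`. -/
def α₀ (n : ℕ) (p v : E n) : ℝ := v.2.2 + ∑ i, p.1 i * v.2.1 i

/-- A diffeomorphism of `ℝ^{2n+1}`: a smooth bijection with smooth inverse. -/
def IsDiffeo (n : ℕ) (f : E n → E n) : Prop :=
  ContDiff ℝ (⊤ : ℕ∞) f ∧ ∃ g : E n → E n, ContDiff ℝ (⊤ : ℕ∞) g ∧ LeftInverse g f ∧ RightInverse g f

/-- A smooth path of diffeomorphisms, parametrized by `t ∈ [0,1]` (smoothly extended to `ℝ`):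
a smooth map such that `g_t := g(t,·)` is a diffeomorphism for every `t ∈ [0,1]`. -/
def IsSmoothPath (n : ℕ) (g : ℝ × E n → E n) : Prop :=
  ContDiff ℝ (⊤ : ℕ∞) g ∧ ∀ t ∈ Icc (0:ℝ) 1, IsDiffeo n (fun p => g (t, p))

/-- The time derivative `∂ₜ g(t,q)` of a path. -/
def pathDeriv (n : ℕ) (g : ℝ × E n → E n) (t : ℝ) (q : E n) : E n :=
  deriv (fun s => g (s, q)) t

/-- A path is positive if `α₀(g(t,q))(∂ₜ g(t,q)) > 0` for all `t ∈ [0,1]` and all `q`. -/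
def IsPositivePath (n : ℕ) (g : ℝ × E n → E n) : Prop :=
  ∀ t ∈ Icc (0:ℝ) 1, ∀ q, 0 < α₀ n (g (t, q)) (pathDeriv n g t q)

/-- A path is null if `α₀(g(t,q))(∂ₜ g(t,q)) = 0` for all `t ∈ [0,1]` and all `q`. -/
def IsNullPath (n : ℕ) (g : ℝ × E n → E n) : Prop :=
  ∀ t ∈ Icc (0:ℝ) 1, ∀ q, α₀ n (g (t, q)) (pathDeriv n g t q) = 0

/-- A path is compactly supported if all `g(t,·)` are the identity outside a fixed compact set. -/
def IsCompactlySupportedPath (n : ℕ) (g : ℝ × E n → E n) : Prop :=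
  ∃ K : Set (E n), IsCompact K ∧ ∀ t ∈ Icc (0:ℝ) 1, ∀ p ∉ K, g (t, p) = p

/-- `f` is connected to the identity by a smooth path of diffeomorphisms. -/
def ConnToId (n : ℕ) (f : E n → E n) : Prop :=
  ∃ g : ℝ × E n → E n, IsSmoothPath n g ∧ (∀ p, g (0, p) = p) ∧ (∀ p, g (1, p) = f p)

/-- `f` is connected to the identity by a compactly supported smooth path of diffeomorphisms. -/
def ConnToIdCompactlySupported (n : ℕ) (f : E n → E n) : Prop :=
  ∃ g : ℝ × E n → E n, IsSmoothPath n g ∧ IsCompactlySupportedPath n g ∧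
    (∀ p, g (0, p) = p) ∧ (∀ p, g (1, p) = f p)


/-! ### Small perturbations of the identity -/

theorem isDiffeo_comp {n : ℕ} {f g : E n → E n} (hf : IsDiffeo n f) (hg : IsDiffeo n g) :
    IsDiffeo n (fun p => f (g p)) := by
  obtain ⟨hf1, f', hf2, hf3, hf4⟩ := hf
  obtain ⟨hg1, g', hg2, hg3, hg4⟩ := hg
  refine ⟨hf1.comp hg1, fun p => g' (f' p), hg2.comp hf2, fun p => ?_, fun p => ?_⟩
  · simp [hf3 (g p), hg3 p]
  · simp [hf4 p, hg4 (f' p)]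

theorem id_add_small {F : Type*} [NormedAddCommGroup F] [NormedSpace ℝ F] [CompleteSpace F]
    (r : F → F) (hr : ContDiff ℝ (⊤ : ℕ∞) r)
    (hb : ∀ p, ‖fderiv ℝ r p‖ ≤ 1 / 2) : ContDiff ℝ (⊤ : ℕ∞) (fun p => p + r p) ∧
      ∃ g : F → F, ContDiff ℝ (⊤ : ℕ∞) g ∧ LeftInverse g (fun p => p + r p) ∧
        RightInverse g (fun p => p + r p) := by
  have hd : Differentiable ℝ r := hr.differentiable (by simp)
  have hL : LipschitzWith (1/2 : NNReal) r := by
    apply lipschitzWith_of_nnnorm_fderiv_le hd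
    intro x
    rw [← NNReal.coe_le_coe]
    simpa using hb x
  have hA : ApproximatesLinearOn (fun p => p + r p)
      ((ContinuousLinearEquiv.refl ℝ F : F ≃L[ℝ] F) : F →L[ℝ] F) univ (1/2 : NNReal) := by
    intro x _ y _
    have := hL.dist_le_mul x y
    rw [dist_eq_norm, dist_eq_norm] at this
    have e : x + r x - (y + r y) - (((ContinuousLinearEquiv.refl ℝ F : F ≃L[ℝ] F) :
      F →L[ℝ] F) (x - y)) = r x - r y := by
      simp; abel
    rw [e]; exact this
  have hN : Subsingleton F ∨ (1/2 : NNReal) <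
      ‖((ContinuousLinearEquiv.refl ℝ F).symm : F →L[ℝ] F)‖₊⁻¹ := by
    rcases subsingleton_or_nontrivial F with h | h
    · exact Or.inl h
    right
    have : ‖((ContinuousLinearEquiv.refl ℝ F).symm : F →L[ℝ] F)‖₊ = 1 := by
      rw [← NNReal.coe_inj]
      exact ContinuousLinearMap.norm_id
    rw [this, ← NNReal.coe_lt_coe]; norm_num
  let H := hA.toHomeomorph _ hN
  have hsm : ContDiff ℝ (⊤ : ℕ∞) (fun p : F => p + r p) := contDiff_id.add hr
  have hne : ∀ a, ‖-(fderiv ℝ r a)‖ < 1 := fun a => by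
    rw [norm_neg]; exact lt_of_le_of_lt (hb a) (by norm_num)
  have hsymm : ContDiff ℝ (⊤ : ℕ∞) H.symm := by
    refine Homeomorph.contDiff_symm H (f₀' := fun a =>
      ContinuousLinearEquiv.unitsEquiv ℝ F (Units.oneSub (-(fderiv ℝ r a)) (hne a))) ?_ hsm
    intro a
    have h1 : HasFDerivAt (fun p : F => p + r p)
      (ContinuousLinearMap.id ℝ F + fderiv ℝ r a) a :=
      (hasFDerivAt_id a).add (hd a).hasFDerivAt
    have e : ((ContinuousLinearEquiv.unitsEquiv ℝ F (Units.oneSub (-(fderiv ℝ r a)) (hne a)) :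
        F ≃L[ℝ] F) : F →L[ℝ] F) = ContinuousLinearMap.id ℝ F + fderiv ℝ r a := by
      ext v; simp
    rw [e]; exact h1
  exact ⟨hsm, H.symm, hsymm, fun p => H.symm_apply_apply p, fun p => H.apply_symm_apply p⟩

theorem isDiffeo_id_add {n : ℕ} (r : E n → E n) (hr : ContDiff ℝ (⊤ : ℕ∞) r)
    (hb : ∀ p, ‖fderiv ℝ r p‖ ≤ 1 / 2) : IsDiffeo n (fun p => p + r p) :=
  id_add_small r hr hb

/-! ### Step functions cut off near the jumps -/

/-- A bump function which is `1` on `[1/4,3/4]` and vanishes outside `(1/8,7/8)`. -/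
def etaBump : ContDiffBump (1/2 : ℝ) := ⟨1/4, 3/8, by norm_num, by norm_num⟩

def eta (s : ℝ) : ℝ := etaBump s

theorem eta_smooth : ContDiff ℝ (⊤ : ℕ∞) eta := etaBump.contDiff

theorem eta_nonneg (s : ℝ) : 0 ≤ eta s := etaBump.nonneg

theorem eta_le_one (s : ℝ) : eta s ≤ 1 := etaBump.le_one

theorem eta_one {s : ℝ} (h1 : 1/4 ≤ s) (h2 : s ≤ 3/4) : eta s = 1 := by
  apply etaBump.one_of_mem_closedBall
  rw [Metric.mem_closedBall, Real.dist_eq, abs_le]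
  constructor <;> simp only [etaBump] <;> linarith

theorem eta_zero {s : ℝ} (h : s ≤ 1/8 ∨ 7/8 ≤ s) : eta s = 0 := by
  apply etaBump.zero_of_le_dist
  rw [Real.dist_eq, le_abs]
  rcases h with h | h
  · right; simp only [etaBump]; linarith
  · left; simp only [etaBump]; linarith

theorem eta_deriv_bound : ∃ K : ℝ, 1 ≤ K ∧ ∀ s, |deriv eta s| ≤ K := by
  have hc : HasCompactSupport eta := etaBump.hasCompactSupport
  obtain ⟨C, hC⟩ := hc.deriv.exists_bound_of_continuous
    (eta_smooth.continuous_deriv (by simp))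
  exact ⟨max C 1, le_max_right _ _, fun s => (hC s).trans (le_max_left _ _)⟩

/-- The cut-off step function. -/
def stepf (A : ℤ → ℝ) (s : ℝ) : ℝ := A ⌊s⌋ * eta (s - ⌊s⌋)

theorem stepf_local (s₀ : ℝ) : ∀ᶠ s in nhds s₀, (∀ A : ℤ → ℝ, stepf A s = A ⌊s₀⌋ * eta (s - ⌊s₀⌋)) ∧
    ((∀ A : ℤ → ℝ, stepf A s = 0) ∨ ⌊s⌋ = ⌊s₀⌋) := by
  have h1 : ∀ᶠ s in nhds s₀, (⌊s₀⌋ : ℝ) - 1/8 < s :=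
    lt_mem_nhds (by linarith [Int.floor_le s₀])
  have h2 : ∀ᶠ s in nhds s₀, s < (⌊s₀⌋ : ℝ) + 1 := gt_mem_nhds (Int.lt_floor_add_one s₀)
  filter_upwards [h1, h2] with s hs1 hs2
  by_cases hs : (⌊s₀⌋ : ℝ) ≤ s
  · have : ⌊s⌋ = ⌊s₀⌋ := Int.floor_eq_iff.2 ⟨hs, hs2⟩
    exact ⟨fun A => by rw [stepf, this], Or.inr this⟩
  · push Not at hs
    have : ⌊s⌋ = ⌊s₀⌋ - 1 := Int.floor_eq_iff.2 ⟨by push_cast; linarith, by push_cast; linarith⟩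
    have e1 : eta (s - ⌊s⌋) = 0 := eta_zero (Or.inr (by rw [this]; push_cast; linarith))
    have e2 : eta (s - ⌊s₀⌋) = 0 := eta_zero (Or.inl (by linarith))
    exact ⟨fun A => by rw [stepf, e1, e2]; simp, Or.inl fun A => by rw [stepf, e1]; simp⟩

theorem stepf_smooth (A : ℤ → ℝ) : ContDiff ℝ (⊤ : ℕ∞) (stepf A) := by
  rw [contDiff_iff_contDiffAt]
  intro s₀
  have h : stepf A =ᶠ[nhds s₀] fun s => A ⌊s₀⌋ * eta (s - ⌊s₀⌋) :=
    (stepf_local s₀).mono fun s hs => hs.1 A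
  refine ContDiffAt.congr_of_eventuallyEq ?_ h
  exact (contDiff_const.mul (eta_smooth.comp (contDiff_id.sub contDiff_const))).contDiffAt

theorem stepf_deriv (A : ℤ → ℝ) (s : ℝ) : deriv (stepf A) s = A ⌊s⌋ * deriv eta (s - ⌊s⌋) := by
  have h : stepf A =ᶠ[nhds s] fun r => A ⌊s⌋ * eta (r - ⌊s⌋) :=
    (stepf_local s).mono fun r hs => hs.1 A
  rw [h.deriv_eq, deriv_const_mul_field, deriv_comp_sub_const]

/-! ### An exhaustion function -/

def rho (n : ℕ) (q : E n) : ℝ := ∑ i, q.1 i ^ 2 + ∑ i, q.2.1 i ^ 2 + q.2.2 ^ 2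

theorem rho_smooth (n : ℕ) : ContDiff ℝ (⊤ : ℕ∞) (rho n) := by
  unfold rho
  fun_prop

theorem norm_le_rho (n : ℕ) (q : E n) : ‖q‖ ≤ rho n q + 1 := by
  have h1 : 0 ≤ ∑ i, q.1 i ^ 2 := Finset.sum_nonneg fun i _ => sq_nonneg _
  have h2 : 0 ≤ ∑ i, q.2.1 i ^ 2 := Finset.sum_nonneg fun i _ => sq_nonneg _
  have h3 := sq_nonneg q.2.2
  have key : ∀ c : ℝ, ‖c‖ ≤ c ^ 2 + 1 := fun c => by
    rw [Real.norm_eq_abs, ← sq_abs]; nlinarith [sq_nonneg (|c| - 1), abs_nonneg c]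
  unfold rho
  refine norm_prod_le_iff.2 ⟨?_, norm_prod_le_iff.2 ⟨?_, ?_⟩⟩
  · refine (pi_norm_le_iff_of_nonneg (by linarith)).2 fun i => ?_
    have h4 : q.1 i ^ 2 ≤ ∑ i, q.1 i ^ 2 :=
      Finset.single_le_sum (f := fun i => q.1 i ^ 2) (fun i _ => sq_nonneg _) (Finset.mem_univ i)
    linarith [key (q.1 i)]
  · refine (pi_norm_le_iff_of_nonneg (by linarith)).2 fun i => ?_
    have h4 : q.2.1 i ^ 2 ≤ ∑ i, q.2.1 i ^ 2 :=
      Finset.single_le_sum (f := fun i => q.2.1 i ^ 2) (fun i _ => sq_nonneg _) (Finset.mem_univ i)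
    linarith [key (q.2.1 i)]
  · have := key q.2.2
    linarith

/-- The amplitudes and frequencies of the two families of wiggles. -/
theorem exists_data (n : ℕ) {T : Type} (B : T → E n → ℝ)
    (hB : ∀ R : ℝ, ∃ C, ∀ τ q, ‖q‖ ≤ R → B τ q ≤ C) :
    ∃ a₁ a₂ ω₁ ω₂ : E n → ℝ,
      ContDiff ℝ (⊤ : ℕ∞) a₁ ∧ ContDiff ℝ (⊤ : ℕ∞) a₂ ∧
      (∀ q₀, ∃ c, ∀ᶠ q in nhds q₀, a₁ q = 0 ∨ ω₁ q = c) ∧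
      (∀ q₀, ∃ c, ∀ᶠ q in nhds q₀, a₂ q = 0 ∨ ω₂ q = c) ∧
      (∀ q, ∃ m : ℤ, ω₁ q = m * (2 * Real.pi)) ∧ (∀ q, ∃ m : ℤ, ω₂ q = m * (2 * Real.pi)) ∧
      (∀ q, 0 ≤ a₁ q) ∧ (∀ q, 0 ≤ a₂ q) ∧ (∀ q, 0 ≤ ω₁ q) ∧ (∀ q, 36 * ω₁ q ≤ ω₂ q) ∧
      (∀ q, a₁ q ≤ 1) ∧ (∀ q, a₂ q ≤ 1) ∧
      (∀ τ q, a₁ q * B τ q ≤ 1) ∧ (∀ τ q, a₂ q * B τ q ≤ 1) ∧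
      (∀ τ q, ‖fderiv ℝ a₁ q‖ * B τ q ≤ 1) ∧ (∀ τ q, ‖fderiv ℝ a₂ q‖ * B τ q ≤ 1) ∧
      (∀ τ q, B τ q < a₁ q ^ 2 * ω₁ q + a₂ q ^ 2 * ω₂ q) := by
  obtain ⟨K, hK1, hK⟩ := eta_deriv_bound
  have hbd : ∀ k : ℤ, ∃ β : ℝ, 1 ≤ β ∧ ∀ q, rho n q ≤ k + 2 →
      K * ‖fderiv ℝ (rho n) q‖ ≤ β ∧ ∀ τ, B τ q ≤ β := by
    intro k
    obtain ⟨C, hC⟩ := hB (k + 3)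
    obtain ⟨C', hC'⟩ := (isCompact_closedBall (0 : E n) (k + 3)).exists_bound_of_continuousOn
      ((rho_smooth n).continuous_fderiv (by simp)).continuousOn
    refine ⟨max (max (K * C') C) 1, le_max_right _ _, fun q hq => ?_⟩
    have hqn : ‖q‖ ≤ k + 3 := by linarith [norm_le_rho n q]
    refine ⟨?_, fun τ => ?_⟩
    · have := hC' q (by simpa using hqn)
      exact (mul_le_mul_of_nonneg_left this (by linarith)).trans
        ((le_max_left _ _).trans (le_max_left _ _))
    · exact (hC τ q hqn).trans ((le_max_right _ _).trans (le_max_left _ _))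
  choose β hβ1 hβ using hbd
  have hm : ∀ k : ℤ, ∃ m : ℕ, β k ^ 5 < m := fun k => exists_nat_gt _
  choose m hm using hm
  set A : ℤ → ℝ := fun k => 1 / β k ^ 2 with hA
  set Ω₁ : ℤ → ℝ := fun k => (m k : ℤ) * (2 * Real.pi) with hΩ₁
  set Ω₂ : ℤ → ℝ := fun k => ((36 * (m k + m (k-1)) : ℤ) : ℝ) * (2 * Real.pi) with hΩ₂
  have hpi : 1 ≤ 2 * Real.pi := by linarith [Real.pi_gt_three]
  have hβ0 : ∀ k, 0 < β k := fun k => by linarith [hβ1 k]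
  have hA0 : ∀ k, 0 ≤ A k := fun k => by have := hβ0 k; simp only [hA]; positivity
  have hAβ2 : ∀ k, A k * β k ^ 2 = 1 := fun k => by have := hβ0 k; simp only [hA]; field_simp
  have hAβ : ∀ k, A k * β k ≤ 1 := fun k => by
    nlinarith [hAβ2 k, hA0 k, hβ1 k, mul_nonneg (hA0 k) (hβ0 k).le]
  have hA1 : ∀ k, A k ≤ 1 := fun k => by
    nlinarith [hAβ k, hA0 k, hβ1 k]
  have hΩ₁0 : ∀ k, 0 ≤ Ω₁ k := fun k => by simp only [hΩ₁]; push_cast; positivity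
  have hΩ₁β : ∀ k, β k ^ 5 < Ω₁ k := fun k => by
    have := hm k
    have h0 : (0:ℝ) ≤ m k := by positivity
    simp only [hΩ₁]; push_cast; nlinarith
  have hΩ₂' : ∀ k, Ω₂ k = 36 * Ω₁ k + 36 * Ω₁ (k - 1) := fun k => by
    simp only [hΩ₁, hΩ₂]; push_cast; ring
  have hgain : ∀ k w, β k ^ 5 < w → β k < A k ^ 2 * w := fun k w hw => by
    have h4 : A k ^ 2 * β k ^ 4 = 1 := by
      have := hAβ2 k
      calc A k ^ 2 * β k ^ 4 = (A k * β k ^ 2) ^ 2 := by ring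
        _ = 1 := by rw [this]; norm_num
    have hApos : 0 < A k ^ 2 := by
      by_contra h
      push Not at h
      have : A k ^ 2 = 0 := le_antisymm h (sq_nonneg _)
      rw [this] at h4; norm_num at h4
    calc β k = A k ^ 2 * β k ^ 4 * β k := by rw [h4]; ring
      _ = A k ^ 2 * β k ^ 5 := by ring
      _ < A k ^ 2 * w := mul_lt_mul_of_pos_left hw hApos
  -- generic facts for a shift `c`
  have gen : ∀ c : ℝ, 0 ≤ c → c ≤ 1/2 →
      ContDiff ℝ (⊤ : ℕ∞) (fun q => stepf A (rho n q + c)) ∧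
      (∀ Ω : ℤ → ℝ, ∀ q₀, ∃ w, ∀ᶠ q in nhds q₀,
        stepf A (rho n q + c) = 0 ∨ Ω ⌊rho n q + c⌋ = w) ∧
      (∀ q, 0 ≤ stepf A (rho n q + c)) ∧
      (∀ q, stepf A (rho n q + c) ≤ A ⌊rho n q + c⌋) ∧
      (∀ τ q, B τ q ≤ β ⌊rho n q + c⌋) ∧
      (∀ τ q, stepf A (rho n q + c) * B τ q ≤ 1) ∧
      (∀ τ q, ‖fderiv ℝ (fun q => stepf A (rho n q + c)) q‖ * B τ q ≤ 1) := by
    intro c hc0 hc1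
    have hsm : ContDiff ℝ (⊤ : ℕ∞) (fun q => stepf A (rho n q + c)) :=
      (stepf_smooth A).comp ((rho_smooth n).add contDiff_const)
    have hnn : ∀ q, 0 ≤ stepf A (rho n q + c) := fun q => mul_nonneg (hA0 _) (eta_nonneg _)
    have hle : ∀ q, stepf A (rho n q + c) ≤ A ⌊rho n q + c⌋ := fun q =>
      mul_le_of_le_one_right (hA0 _) (eta_le_one _)
    have hk : ∀ q, rho n q ≤ (⌊rho n q + c⌋ : ℝ) + 2 := fun q => by
      linarith [Int.lt_floor_add_one (rho n q + c)]
    have hBβ : ∀ τ q, B τ q ≤ β ⌊rho n q + c⌋ := fun τ q => (hβ _ q (hk q)).2 τ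
    refine ⟨hsm, ?_, hnn, hle, hBβ, ?_, ?_⟩
    · intro Ω q₀
      refine ⟨Ω ⌊rho n q₀ + c⌋, ?_⟩
      have hcont : Continuous fun q => rho n q + c := (rho_smooth n).continuous.add continuous_const
      filter_upwards [(hcont.tendsto q₀).eventually (stepf_local (rho n q₀ + c))] with q hq
      rcases hq.2 with h | h
      · exact Or.inl (h A)
      · exact Or.inr (by rw [h])
    · intro τ q
      calc stepf A (rho n q + c) * B τ q ≤ stepf A (rho n q + c) * β ⌊rho n q + c⌋ :=
            mul_le_mul_of_nonneg_left (hBβ τ q) (hnn q)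
        _ ≤ A ⌊rho n q + c⌋ * β ⌊rho n q + c⌋ := mul_le_mul_of_nonneg_right (hle q) (hβ0 _).le
        _ ≤ 1 := hAβ _
    · intro τ q
      set k := ⌊rho n q + c⌋ with hkdef
      have hder : HasFDerivAt (fun q => stepf A (rho n q + c))
          ((deriv (stepf A) (rho n q + c)) • fderiv ℝ (rho n) q) q := by
        have h1 : HasDerivAt (stepf A) (deriv (stepf A) (rho n q + c)) (rho n q + c) :=
          ((stepf_smooth A).differentiable (by simp) _).hasDerivAt
        have h2 : HasFDerivAt (fun q => rho n q + c) (fderiv ℝ (rho n) q) q :=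
          ((rho_smooth n).differentiable (by simp) q).hasFDerivAt.add_const c
        exact h1.comp_hasFDerivAt q h2
      rw [hder.fderiv, norm_smul, stepf_deriv, ← hkdef, norm_mul, Real.norm_eq_abs,
        Real.norm_eq_abs, abs_of_nonneg (hA0 k)]
      have e1 : |deriv eta (rho n q + c - k)| * ‖fderiv ℝ (rho n) q‖ ≤ β k :=
        (mul_le_mul_of_nonneg_right (hK _) (norm_nonneg _)).trans (hβ k q (hk q)).1
      calc A k * |deriv eta (rho n q + c - k)| * ‖fderiv ℝ (rho n) q‖ * B τ q
          ≤ A k * |deriv eta (rho n q + c - k)| * ‖fderiv ℝ (rho n) q‖ * β k := by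
            apply mul_le_mul_of_nonneg_left (hBβ τ q)
            have := hA0 k
            positivity
        _ = A k * (|deriv eta (rho n q + c - k)| * ‖fderiv ℝ (rho n) q‖) * β k := by ring
        _ ≤ A k * β k * β k := by
            apply mul_le_mul_of_nonneg_right _ (hβ0 k).le
            exact mul_le_mul_of_nonneg_left e1 (hA0 k)
        _ = A k * β k ^ 2 := by ring
        _ ≤ 1 := (hAβ2 k).le
  obtain ⟨g1, g2, g3, g4, g5, g6, g7⟩ := gen 0 le_rfl (by norm_num)
  obtain ⟨g1', g2', g3', g4', g5', g6', g7'⟩ := gen (1/2) (by norm_num) le_rfl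
  have hω0 : ∀ k, 0 ≤ Ω₂ k := fun k => by
    rw [hΩ₂']; linarith [hΩ₁0 k, hΩ₁0 (k-1)]
  refine ⟨fun q => stepf A (rho n q + 0), fun q => stepf A (rho n q + 1/2),
    fun q => Ω₁ ⌊rho n q + 0⌋, fun q => Ω₂ ⌊rho n q + 1/2⌋, g1, g1', g2 Ω₁, g2' Ω₂,
    fun q => ⟨_, rfl⟩, fun q => ⟨_, rfl⟩, g3, g3', fun q => hΩ₁0 _, fun q => ?_,
    fun q => (g4 q).trans (hA1 _), fun q => (g4' q).trans (hA1 _), g6, g6', g7, g7', ?_⟩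
  · simp only
    rw [hΩ₂']
    have : ⌊rho n q + 0⌋ = ⌊rho n q + 1/2⌋ ∨ ⌊rho n q + 0⌋ = ⌊rho n q + 1/2⌋ - 1 := by
      have a1 := Int.floor_le (rho n q + 0)
      have a2 := Int.lt_floor_add_one (rho n q + 0)
      have a3 := Int.floor_le (rho n q + 1/2)
      have a4 := Int.lt_floor_add_one (rho n q + 1/2)
      have b1 : ⌊rho n q + 0⌋ < ⌊rho n q + 1/2⌋ + 1 := by
        have : ((⌊rho n q + 0⌋ : ℤ) : ℝ) < ((⌊rho n q + 1/2⌋ + 1 : ℤ) : ℝ) := by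
          push_cast; linarith
        exact_mod_cast this
      have b2 : ⌊rho n q + 1/2⌋ < ⌊rho n q + 0⌋ + 2 := by
        have : ((⌊rho n q + 1/2⌋ : ℤ) : ℝ) < ((⌊rho n q + 0⌋ + 2 : ℤ) : ℝ) := by
          push_cast; linarith
        exact_mod_cast this
      omega
    rcases this with h | h
    · rw [h]; linarith [hΩ₁0 (⌊rho n q + 1/2⌋ - 1)]
    · rw [h]; linarith [hΩ₁0 (⌊rho n q + 1/2⌋)]
  · intro τ q
    simp only
    have p1 : 0 ≤ stepf A (rho n q + 0) ^ 2 * Ω₁ ⌊rho n q + 0⌋ :=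
      mul_nonneg (sq_nonneg _) (hΩ₁0 _)
    have p2 : 0 ≤ stepf A (rho n q + 1/2) ^ 2 * Ω₂ ⌊rho n q + 1/2⌋ :=
      mul_nonneg (sq_nonneg _) (hω0 _)
    by_cases h : 1/4 ≤ rho n q + 0 - ⌊rho n q + 0⌋ ∧ rho n q + 0 - ⌊rho n q + 0⌋ ≤ 3/4
    · have e : stepf A (rho n q + 0) = A ⌊rho n q + 0⌋ := by
        rw [stepf, eta_one h.1 h.2, mul_one]
      rw [e] at p1 ⊢
      linarith [g5 τ q, hgain _ _ (hΩ₁β ⌊rho n q + 0⌋)]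
    · have e : stepf A (rho n q + 1/2) = A ⌊rho n q + 1/2⌋ := by
        have a1 := Int.floor_le (rho n q + 0)
        have a2 := Int.lt_floor_add_one (rho n q + 0)
        by_cases hh : 1/4 ≤ rho n q + 0 - ⌊rho n q + 0⌋
        · have h3 : 3/4 < rho n q + 0 - ⌊rho n q + 0⌋ := by
            by_contra h'; exact h ⟨hh, not_lt.1 h'⟩
          have : ⌊rho n q + 1/2⌋ = ⌊rho n q + 0⌋ + 1 :=
            Int.floor_eq_iff.2 ⟨by push_cast; linarith, by push_cast; linarith⟩
          rw [stepf, eta_one, mul_one] <;> rw [this] <;> push_cast <;> linarith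
        · push Not at hh
          have : ⌊rho n q + 1/2⌋ = ⌊rho n q + 0⌋ :=
            Int.floor_eq_iff.2 ⟨by linarith, by linarith⟩
          rw [stepf, eta_one, mul_one] <;> rw [this] <;> linarith
      rw [e] at p2 ⊢
      have h5 : β ⌊rho n q + 1/2⌋ ^ 5 < Ω₂ ⌊rho n q + 1/2⌋ := by
        rw [hΩ₂']
        linarith [hΩ₁β ⌊rho n q + 1/2⌋, hΩ₁0 ⌊rho n q + 1/2⌋, hΩ₁0 (⌊rho n q + 1/2⌋ - 1)]
      linarith [g5' τ q, hgain _ _ h5]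

/-! ### The wiggle -/

section Wiggle

variable {F : Type*} [NormedAddCommGroup F] [NormedSpace ℝ F]

/-- The wiggle as a vector, in terms of amplitudes, frequencies, time and the `x₀`-coordinate. -/
def wig (ex ey ez : F) (a₁ a₂ o₁ o₂ t X : ℝ) : F :=
  (a₁ * (Real.cos (o₁ * t) - 1) + a₂ * (Real.cos (o₂ * t) - 1)) • ex +
  (a₁ * Real.sin (o₁ * t) + a₂ * Real.sin (o₂ * t)) • ey +
  (-(X * (a₁ * Real.sin (o₁ * t) + a₂ * Real.sin (o₂ * t)))
    - a₁ ^ 2 * (Real.sin (2 * (o₁ * t)) / 4 - Real.sin (o₁ * t))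
    - a₂ ^ 2 * (Real.sin (2 * (o₂ * t)) / 4 - Real.sin (o₂ * t))
    - a₁ * (Real.cos (o₁ * t) - 1) * (a₂ * Real.sin (o₂ * t))) • ez

theorem wig_congr (ex ey ez : F) (a₁ a₂ o₁ o₂ c₁ c₂ t X : ℝ) (h₁ : a₁ = 0 ∨ o₁ = c₁)
    (h₂ : a₂ = 0 ∨ o₂ = c₂) : wig ex ey ez a₁ a₂ o₁ o₂ t X = wig ex ey ez a₁ a₂ c₁ c₂ t X := by
  rcases h₁ with rfl | rfl <;> rcases h₂ with rfl | rfl <;> simp [wig]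

theorem wig_zero (ex ey ez : F) (a₁ a₂ o₁ o₂ X : ℝ) : wig ex ey ez a₁ a₂ o₁ o₂ 0 X = 0 := by
  simp [wig]

theorem wig_one (ex ey ez : F) (a₁ a₂ o₁ o₂ X : ℝ) (h₁ : ∃ m : ℤ, o₁ = m * (2 * Real.pi))
    (h₂ : ∃ m : ℤ, o₂ = m * (2 * Real.pi)) : wig ex ey ez a₁ a₂ o₁ o₂ 1 X = 0 := by
  obtain ⟨m, rfl⟩ := h₁
  obtain ⟨l, rfl⟩ := h₂
  have hs : ∀ m : ℤ, Real.sin (m * (2 * Real.pi)) = 0 := fun m => by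
    have := Real.sin_int_mul_pi (m * 2)
    rw [← this]; push_cast; ring_nf
  have hs2 : ∀ m : ℤ, Real.sin (2 * (m * (2 * Real.pi))) = 0 := fun m => by
    have := Real.sin_int_mul_pi (m * 4)
    rw [← this]; push_cast; ring_nf
  simp [wig, hs, hs2, Real.cos_int_mul_two_pi]

/-- Bound for the spatial derivative of the wiggle with constant frequencies. -/
theorem wig_fderiv_bound {G : Type*} [NormedAddCommGroup G] [NormedSpace ℝ G]
    (ex ey ez : F) (hx : ‖ex‖ ≤ 1) (hy : ‖ey‖ ≤ 1) (hz : ‖ez‖ ≤ 1)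
    (a₁ a₂ X : G → ℝ) (q : G) (ha₁ : DifferentiableAt ℝ a₁ q) (ha₂ : DifferentiableAt ℝ a₂ q)
    (hX : DifferentiableAt ℝ X q) (o₁ o₂ t ε b : ℝ) (hε1 : ε ≤ 1) (hb : 1 ≤ b)
    (h1 : |a₁ q| ≤ ε) (h2 : |a₂ q| ≤ ε) (h3 : ‖fderiv ℝ a₁ q‖ ≤ ε) (h4 : ‖fderiv ℝ a₂ q‖ ≤ ε)
    (h5 : |X q| ≤ b) (h6 : ‖fderiv ℝ X q‖ ≤ b) :
    ‖fderiv ℝ (fun q => wig ex ey ez (a₁ q) (a₂ q) o₁ o₂ t (X q)) q‖ ≤ 19 * ε * b := by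
  unfold wig
  have k1 : |Real.cos (o₁ * t) - 1| ≤ 2 := by
    rw [abs_le]; constructor <;> linarith [Real.cos_le_one (o₁ * t), Real.neg_one_le_cos (o₁ * t)]
  have k2 : |Real.cos (o₂ * t) - 1| ≤ 2 := by
    rw [abs_le]; constructor <;> linarith [Real.cos_le_one (o₂ * t), Real.neg_one_le_cos (o₂ * t)]
  have s1 : |Real.sin (o₁ * t)| ≤ 1 := Real.abs_sin_le_one _
  have s2 : |Real.sin (o₂ * t)| ≤ 1 := Real.abs_sin_le_one _
  have m : ∀ θ : ℝ, |Real.sin (2 * θ) / 4 - Real.sin θ| ≤ 5 / 4 := fun θ => by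
    rw [abs_le]
    constructor <;> linarith [Real.sin_le_one θ, Real.neg_one_le_sin θ, Real.sin_le_one (2 * θ),
      Real.neg_one_le_sin (2 * θ)]
  have m1 := m (o₁ * t)
  have m2 := m (o₂ * t)
  generalize Real.cos (o₁ * t) - 1 = κ₁ at *
  generalize Real.cos (o₂ * t) - 1 = κ₂ at *
  generalize Real.sin (2 * (o₁ * t)) / 4 - Real.sin (o₁ * t) = μ₁ at *
  generalize Real.sin (2 * (o₂ * t)) / 4 - Real.sin (o₂ * t) = μ₂ at *
  generalize Real.sin (o₁ * t) = σ₁ at *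
  generalize Real.sin (o₂ * t) = σ₂ at *
  have hε0 : 0 ≤ ε := (abs_nonneg _).trans h1
  set A := fderiv ℝ a₁ q
  set A' := fderiv ℝ a₂ q
  set Y := fderiv ℝ X q
  have d1 : HasFDerivAt a₁ A q := ha₁.hasFDerivAt
  have d2 : HasFDerivAt a₂ A' q := ha₂.hasFDerivAt
  have d3 : HasFDerivAt X Y q := hX.hasFDerivAt
  have du : HasFDerivAt (fun q => a₁ q * κ₁ + a₂ q * κ₂) (κ₁ • A + κ₂ • A') q :=
    (d1.mul_const κ₁).add (d2.mul_const κ₂)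
  have dv : HasFDerivAt (fun q => a₁ q * σ₁ + a₂ q * σ₂) (σ₁ • A + σ₂ • A') q :=
    (d1.mul_const σ₁).add (d2.mul_const σ₂)
  have dz : HasFDerivAt (fun q => -(X q * (a₁ q * σ₁ + a₂ q * σ₂)) - a₁ q ^ 2 * μ₁ -
      a₂ q ^ 2 * μ₂ - a₁ q * κ₁ * (a₂ q * σ₂))
      (-(X q • (σ₁ • A + σ₂ • A') + (a₁ q * σ₁ + a₂ q * σ₂) • Y) - (2 * a₁ q * μ₁) • A
        - (2 * a₂ q * μ₂) • A' - ((a₁ q * κ₁ * σ₂) • A' + (a₂ q * σ₂ * κ₁) • A)) q := by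
    have e1 := (d3.mul dv).neg
    have e2 := (d1.pow 2).mul_const μ₁
    have e3 := (d2.pow 2).mul_const μ₂
    have e4 := (d1.mul_const κ₁).mul (d2.mul_const σ₂)
    refine (((e1.sub e2).sub e3).sub e4).congr_fderiv ?_
    ext v
    simp
    ring
  have hw := ((du.smul_const ex).add (dv.smul_const ey)).add (dz.smul_const ez)
  have hw' : fderiv ℝ (fun q => (a₁ q * κ₁ + a₂ q * κ₂) • ex + (a₁ q * σ₁ + a₂ q * σ₂) • ey +
    (-(X q * (a₁ q * σ₁ + a₂ q * σ₂)) - a₁ q ^ 2 * μ₁ -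
      a₂ q ^ 2 * μ₂ - a₁ q * κ₁ * (a₂ q * σ₂)) • ez) q = _ := hw.fderiv
  rw [hw']
  have smulb : ∀ (c C : ℝ) (L : G →L[ℝ] ℝ) (δ : ℝ), |c| ≤ C → ‖L‖ ≤ δ → ‖c • L‖ ≤ C * δ :=
    fun c C L δ hc hL => by
      rw [norm_smul, Real.norm_eq_abs]
      exact mul_le_mul hc hL (norm_nonneg _) ((abs_nonneg _).trans hc)
  have mulb : ∀ c d C D : ℝ, |c| ≤ C → |d| ≤ D → |c * d| ≤ C * D := fun c d C D hc hd => by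
    rw [abs_mul]; exact mul_le_mul hc hd (abs_nonneg _) ((abs_nonneg _).trans hc)
  have nu : ‖κ₁ • A + κ₂ • A'‖ ≤ 4 * ε := by
    linarith [norm_add_le (κ₁ • A) (κ₂ • A'), smulb _ _ _ _ k1 h3, smulb _ _ _ _ k2 h4]
  have nv : ‖σ₁ • A + σ₂ • A'‖ ≤ 2 * ε := by
    linarith [norm_add_le (σ₁ • A) (σ₂ • A'), smulb _ _ _ _ s1 h3, smulb _ _ _ _ s2 h4]
  have hv : |a₁ q * σ₁ + a₂ q * σ₂| ≤ 2 * ε := by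
    linarith [abs_add_le (a₁ q * σ₁) (a₂ q * σ₂), mulb _ _ _ _ h1 s1, mulb _ _ _ _ h2 s2]
  have two : |(2:ℝ)| ≤ 2 := by norm_num
  have z1 := smulb _ _ _ _ h5 nv
  have z2 := smulb _ _ _ _ hv h6
  have z3 := smulb _ _ _ _ (mulb _ _ _ _ (mulb _ _ _ _ two h1) m1) h3
  have z4 := smulb _ _ _ _ (mulb _ _ _ _ (mulb _ _ _ _ two h2) m2) h4
  have z5 := smulb _ _ _ _ (mulb _ _ _ _ (mulb _ _ _ _ h1 k1) s2) h4
  have z6 := smulb _ _ _ _ (mulb _ _ _ _ (mulb _ _ _ _ h2 s2) k1) h3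
  have εε : ε * ε ≤ ε := by nlinarith
  have εb : ε ≤ ε * b := by nlinarith
  have nz : ‖(-(X q • (σ₁ • A + σ₂ • A') + (a₁ q * σ₁ + a₂ q * σ₂) • Y) - (2 * a₁ q * μ₁) • A
        - (2 * a₂ q * μ₂) • A' - ((a₁ q * κ₁ * σ₂) • A' + (a₂ q * σ₂ * κ₁) • A))‖
        ≤ 4 * (ε * b) + 9 * ε := by
    refine (norm_sub_le _ _).trans ?_
    refine (add_le_add (norm_sub_le _ _) (norm_add_le _ _)).trans ?_
    refine (add_le_add (add_le_add (norm_sub_le _ _) le_rfl) le_rfl).trans ?_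
    rw [norm_neg]
    refine (add_le_add (add_le_add (add_le_add (norm_add_le _ _) le_rfl) le_rfl) le_rfl).trans ?_
    nlinarith
  have sm : ∀ (L : G →L[ℝ] ℝ) (e : F) (δ : ℝ), ‖L‖ ≤ δ → ‖e‖ ≤ 1 → ‖L.smulRight e‖ ≤ δ := by
    intro L e δ hL he
    rw [ContinuousLinearMap.norm_smulRight_apply]
    nlinarith [norm_nonneg L, norm_nonneg e]
  refine (norm_add₃_le).trans ?_
  linarith [sm _ _ _ nu hx, sm _ _ _ nv hy, sm _ _ _ nz hz]

end Wiggle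

theorem alpha_wiggle {n : ℕ} (i₀ : Fin n) (p v : E n) (U U' W W' Z Z' : ℝ) :
    α₀ n (p + (U • ((Pi.single i₀ 1, 0, 0) : E n) + W • ((0, Pi.single i₀ 1, 0) : E n) +
        Z • ((0, 0, 1) : E n)))
      (v + (U' • ((Pi.single i₀ 1, 0, 0) : E n) + W' • ((0, Pi.single i₀ 1, 0) : E n) +
        Z' • ((0, 0, 1) : E n))) =
    α₀ n p v + U * v.2.1 i₀ + Z' + (p.1 i₀ + U) * W' := by
  simp only [α₀, Prod.fst_add, Prod.snd_add, Prod.smul_fst, Prod.smul_snd, Pi.add_apply,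
    Pi.smul_apply, smul_eq_mul, mul_zero, add_zero, zero_add,
    smul_zero, mul_one]
  have : ∀ i, (p.1 i + U * (Pi.single i₀ 1 : Fin n → ℝ) i) *
      (v.2.1 i + W' * (Pi.single i₀ 1 : Fin n → ℝ) i) =
      p.1 i * v.2.1 i + (if i = i₀ then (U * v.2.1 i + (p.1 i + U) * W') else 0) := by
    intro i
    by_cases h : i = i₀
    · subst h; simp; ring
    · simp [h]
  simp only [this, Finset.sum_add_distrib, Finset.sum_ite_eq', Finset.mem_univ, if_true]
  ring

/-- The scalar estimate behind positivity. -/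
theorem scalar_pos (α a₁ a₂ o₁ o₂ c₁ s₁ c₂ s₂ X X' Y' b : ℝ)
    (ha₁ : 0 ≤ a₁) (ha₂ : 0 ≤ a₂) (ha₁' : a₁ ≤ 1) (ha₂' : a₂ ≤ 1)
    (ho : 0 ≤ o₁) (ho' : 36 * o₁ ≤ o₂)
    (hc₁ : |c₁| ≤ 1) (hc₂ : |c₂| ≤ 1) (hs₁ : |s₁| ≤ 1) (hs₂ : |s₂| ≤ 1)
    (hα : |α| ≤ b) (hX : |X'| ≤ b) (hY : |Y'| ≤ b)
    (hgain : 28 * b < a₁ ^ 2 * o₁ + a₂ ^ 2 * o₂) :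
    0 < α + (a₁ * (c₁ - 1) + a₂ * (c₂ - 1)) * Y' +
      (-(X' * (a₁ * s₁ + a₂ * s₂) + X * (a₁ * (c₁ * o₁) + a₂ * (c₂ * o₂)))
        - a₁ ^ 2 * ((2 * c₁ ^ 2 - 1) * (2 * o₁) / 4 - c₁ * o₁)
        - a₂ ^ 2 * ((2 * c₂ ^ 2 - 1) * (2 * o₂) / 4 - c₂ * o₂)
        - (a₁ * (-s₁ * o₁) * (a₂ * s₂) + a₁ * (c₁ - 1) * (a₂ * (c₂ * o₂)))) +
      (X + (a₁ * (c₁ - 1) + a₂ * (c₂ - 1))) * (a₁ * (c₁ * o₁) + a₂ * (c₂ * o₂)) := by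
  have mulb : ∀ c d C D : ℝ, |c| ≤ C → |d| ≤ D → |c * d| ≤ C * D := fun c d C D hc hd => by
    rw [abs_mul]; exact mul_le_mul hc hd (abs_nonneg _) ((abs_nonneg _).trans hc)
  have hU : |a₁ * (c₁ - 1) + a₂ * (c₂ - 1)| ≤ 4 := by
    rw [abs_le] at *
    constructor <;> nlinarith
  have hV : |a₁ * s₁ + a₂ * s₂| ≤ 2 := by
    rw [abs_le] at *
    constructor <;> nlinarith
  have hx : |(c₂ - 1) * c₁ + s₁ * s₂| ≤ 3 := by
    have e1 : |c₂ - 1| ≤ 2 := by rw [abs_le] at *; constructor <;> linarith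
    linarith [abs_add_le ((c₂ - 1) * c₁) (s₁ * s₂), mulb _ _ _ _ e1 hc₁, mulb _ _ _ _ hs₁ hs₂]
  have t1 := (abs_le.1 (mulb _ _ _ _ hU hY)).1
  have t2 := (abs_le.1 (mulb _ _ _ _ hX hV)).2
  have h0 : 0 ≤ a₁ * a₂ * o₁ := by positivity
  have t3 : -(a₁ * a₂ * o₁ * 3) ≤ a₁ * a₂ * o₁ * ((c₂ - 1) * c₁ + s₁ * s₂) := by
    have := mul_le_mul_of_nonneg_left (abs_le.1 hx).1 h0
    linarith
  have t4 : 12 * (a₁ * a₂ * o₁) ≤ a₁ ^ 2 * o₁ + a₂ ^ 2 * o₂ := by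
    have := mul_nonneg (sq_nonneg (a₁ - 6 * a₂)) ho
    have := mul_le_mul_of_nonneg_left ho' (sq_nonneg a₂)
    nlinarith
  have t5 := (abs_le.1 hα).1
  have key : α + (a₁ * (c₁ - 1) + a₂ * (c₂ - 1)) * Y' +
      (-(X' * (a₁ * s₁ + a₂ * s₂) + X * (a₁ * (c₁ * o₁) + a₂ * (c₂ * o₂)))
        - a₁ ^ 2 * ((2 * c₁ ^ 2 - 1) * (2 * o₁) / 4 - c₁ * o₁)
        - a₂ ^ 2 * ((2 * c₂ ^ 2 - 1) * (2 * o₂) / 4 - c₂ * o₂)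
        - (a₁ * (-s₁ * o₁) * (a₂ * s₂) + a₁ * (c₁ - 1) * (a₂ * (c₂ * o₂)))) +
      (X + (a₁ * (c₁ - 1) + a₂ * (c₂ - 1))) * (a₁ * (c₁ * o₁) + a₂ * (c₂ * o₂)) =
      α + (a₁ * (c₁ - 1) + a₂ * (c₂ - 1)) * Y' - X' * (a₁ * s₁ + a₂ * s₂) +
      a₁ * a₂ * o₁ * ((c₂ - 1) * c₁ + s₁ * s₂) + (a₁ ^ 2 * o₁ + a₂ ^ 2 * o₂) / 2 := by ring
  rw [key]
  linarith

/-! ### Perturbing a diffeomorphism -/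

theorem fderiv_diffeo {n : ℕ} {f k : E n → E n} (hf : ContDiff ℝ (⊤ : ℕ∞) f)
    (hk : ContDiff ℝ (⊤ : ℕ∞) k) (hl : LeftInverse k f) (hr : RightInverse k f) (q : E n) :
    (fderiv ℝ f q).comp (fderiv ℝ k (f q)) = ContinuousLinearMap.id ℝ (E n) ∧
    (fderiv ℝ k (f q)).comp (fderiv ℝ f q) = ContinuousLinearMap.id ℝ (E n) := by
  have df := hf.differentiable (by simp)
  have dk := hk.differentiable (by simp)
  constructor
  · have h1 : fderiv ℝ (f ∘ k) (f q) = (fderiv ℝ f (k (f q))).comp (fderiv ℝ k (f q)) :=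
      fderiv_comp _ (df _) (dk _)
    rw [hr.comp_eq_id, hl q] at h1
    rw [← h1]; exact fderiv_id
  · have h1 : fderiv ℝ (k ∘ f) q = (fderiv ℝ k (f q)).comp (fderiv ℝ f q) :=
      fderiv_comp _ (dk _) (df _)
    rw [hl.comp_eq_id] at h1
    rw [← h1]; exact fderiv_id

theorem isDiffeo_perturb {n : ℕ} {f w : E n → E n} (hf : IsDiffeo n f)
    (hw : ContDiff ℝ (⊤ : ℕ∞) w)
    (hb : ∀ q, ‖fderiv ℝ w q‖ * ‖(fderiv ℝ f q).inverse‖ ≤ 1 / 2) :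
    IsDiffeo n (fun q => f q + w q) := by
  have hf' := hf
  obtain ⟨hf1, k, hk, hl, hr⟩ := hf'
  have hR : IsDiffeo n (fun p => p + w (k p)) := by
    refine isDiffeo_id_add (fun p => w (k p)) (hw.comp hk) fun p => ?_
    have h1 : fderiv ℝ (w ∘ k) p = (fderiv ℝ w (k p)).comp (fderiv ℝ k p) :=
      fderiv_comp _ (hw.differentiable (by simp) _) (hk.differentiable (by simp) _)
    have h2 : fderiv ℝ k p = (fderiv ℝ f (k p)).inverse := by
      have := fderiv_diffeo hf1 hk hl hr (k p)
      rw [hr p] at this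
      exact (ContinuousLinearMap.inverse_eq this.1 this.2).symm
    change ‖fderiv ℝ (w ∘ k) p‖ ≤ 1 / 2
    rw [h1, h2]
    exact (ContinuousLinearMap.opNorm_comp_le _ _).trans (hb (k p))
  have := isDiffeo_comp hR hf
  simpa only [hl _] using this

/-! ### The main bound along the path -/

theorem path_bound {n : ℕ} (h : ℝ × E n → E n) (hh : IsSmoothPath n h) :
    ∀ R : ℝ, ∃ C : ℝ, ∀ t ∈ Icc (0:ℝ) 1, ∀ q, ‖q‖ ≤ R →
      ‖h (t, q)‖ + ‖fderiv ℝ (fun p => h (t, p)) q‖ + ‖(fderiv ℝ (fun p => h (t, p)) q).inverse‖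
        + ‖pathDeriv n h t q‖ + |α₀ n (h (t, q)) (pathDeriv n h t q)| ≤ C := by
  intro R
  obtain ⟨hs, hd⟩ := hh
  have dh := hs.differentiable (by simp)
  have cD : Continuous (fderiv ℝ h) := hs.continuous_fderiv (by simp)
  have eD : ∀ t q, fderiv ℝ (fun p => h (t, p)) q =
      (fderiv ℝ h (t, q)).comp (ContinuousLinearMap.inr ℝ ℝ (E n)) := fun t q => by
    have : HasFDerivAt (fun p : E n => (t, p)) (ContinuousLinearMap.inr ℝ ℝ (E n)) q :=
      hasFDerivAt_prodMk_right t q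
    exact ((dh (t, q)).hasFDerivAt.comp q this).fderiv
  have eV : ∀ t q, pathDeriv n h t q = fderiv ℝ h (t, q) (1, 0) := fun t q => by
    have : HasDerivAt (fun s : ℝ => (s, q)) ((1 : ℝ), (0 : E n)) t :=
      (hasDerivAt_id t).prodMk (hasDerivAt_const t q)
    exact ((dh (t, q)).hasFDerivAt.comp_hasDerivAt t this).deriv
  have c1 : Continuous fun x : ℝ × E n => fderiv ℝ (fun p => h (x.1, p)) x.2 := by
    simp only [eD]
    exact cD.clm_comp continuous_const
  have c2 : Continuous fun x : ℝ × E n => pathDeriv n h x.1 x.2 := by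
    simp only [eV]
    exact cD.clm_apply continuous_const
  have c0 := hs.continuous
  have c3 : Continuous fun x : ℝ × E n => α₀ n (h x) (pathDeriv n h x.1 x.2) := by
    unfold α₀
    fun_prop
  have c4 : ContinuousOn (fun x : ℝ × E n => (fderiv ℝ (fun p => h (x.1, p)) x.2).inverse)
      (Icc (0:ℝ) 1 ×ˢ Metric.closedBall (0 : E n) R) := by
    rintro ⟨t, q⟩ ⟨ht, -⟩
    apply ContinuousAt.continuousWithinAt
    obtain ⟨hf1, k, hk, hl, hr⟩ := hd t ht
    obtain ⟨i1, i2⟩ := fderiv_diffeo hf1 hk hl hr q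
    let e : E n ≃L[ℝ] E n := ContinuousLinearEquiv.equivOfInverse' _ _ i1 i2
    have he : (e : E n →L[ℝ] E n) = fderiv ℝ (fun p => h (t, p)) q := rfl
    have := (contDiffAt_map_inverse (𝕜 := ℝ) (n := 0) e).continuousAt
    rw [he] at this
    exact ContinuousAt.comp (f := fun x : ℝ × E n => fderiv ℝ (fun p => h (x.1, p)) x.2)
      (x := (t, q)) this c1.continuousAt
  have hK : IsCompact (Icc (0:ℝ) 1 ×ˢ Metric.closedBall (0 : E n) R) :=
    isCompact_Icc.prod (isCompact_closedBall _ _)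
  obtain ⟨C, hC⟩ := hK.exists_bound_of_continuousOn
    ((((c0.norm.continuousOn.add c1.norm.continuousOn).add c4.norm).add
      c2.norm.continuousOn).add c3.abs.continuousOn)
  refine ⟨C, fun t ht q hq => ?_⟩
  exact (le_abs_self _).trans (hC (t, q) ⟨ht, by simpa using hq⟩)

/-! ### The main theorem -/

/-- Every diffeomorphism of `ℝ^{2n+1}` (standard contact structure) that is
connected to the identity by a smooth path of diffeomorphisms is connected to the identity by a
positive path of diffeomorphisms. -/
theorem positive_path_to_any_diffeo (n : ℕ) (hn : 1 ≤ n) (f : E n → E n)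
    (hf : IsDiffeo n f) (hconn : ConnToId n f) :
    ∃ g : ℝ × E n → E n, IsSmoothPath n g ∧ IsPositivePath n g ∧
      (∀ p, g (0, p) = p) ∧ (∀ p, g (1, p) = f p) := by
  obtain ⟨h, hh, h0, h1⟩ := hconn
  have hs : ContDiff ℝ (⊤ : ℕ∞) h := hh.1
  have dh := hs.differentiable (by simp)
  let i₀ : Fin n := ⟨0, hn⟩
  let b : ℝ → E n → ℝ := fun t q => ‖h (t, q)‖ + ‖fderiv ℝ (fun p => h (t, p)) q‖ +
    ‖(fderiv ℝ (fun p => h (t, p)) q).inverse‖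
        + ‖pathDeriv n h t q‖ + |α₀ n (h (t, q)) (pathDeriv n h t q)|
  have hb0 : ∀ t q, 0 ≤ b t q := fun t q => by positivity
  obtain ⟨a₁, a₂, ω₁, ω₂, sa₁, sa₂, lc₁, lc₂, int₁, int₂, na₁, na₂, nω, hω, la₁, la₂, ba₁, ba₂,
    da₁, da₂, gain⟩ := exists_data n (T := Icc (0:ℝ) 1) (fun t q => 100 * (1 + b t q) ^ 2) (by
      intro R
      obtain ⟨C, hC⟩ := path_bound h hh R
      refine ⟨100 * (1 + C) ^ 2, fun t q hq => ?_⟩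
      have h2 := hC t t.2 q hq
      have h3 : b t q ≤ C := h2
      have := hb0 t q
      gcongr)
  let ex : E n := (Pi.single i₀ 1, 0, 0)
  let ey : E n := (0, Pi.single i₀ 1, 0)
  let ez : E n := (0, 0, 1)
  have nsingle : ‖(Pi.single i₀ 1 : Fin n → ℝ)‖ ≤ 1 := by
    rw [pi_norm_le_iff_of_nonneg zero_le_one]
    intro i
    by_cases h : i = i₀
    · subst h; simp
    · simp [h]
  have hex : ‖ex‖ ≤ 1 := by
    simp only [ex, norm_prod_le_iff]; exact ⟨nsingle, by simp, by simp⟩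
  have hey : ‖ey‖ ≤ 1 := by
    simp only [ey, norm_prod_le_iff]; exact ⟨by simp, nsingle, by simp⟩
  have hez : ‖ez‖ ≤ 1 := by
    simp only [ez, norm_prod_le_iff]; exact ⟨by simp, by simp, by simp⟩
  let w : ℝ × E n → E n := fun x =>
    wig ex ey ez (a₁ x.2) (a₂ x.2) (ω₁ x.2) (ω₂ x.2) x.1 ((h x).1 i₀)
  have hwloc : ∀ q₀, ∃ c₁ c₂ : ℝ, ∀ᶠ q in nhds q₀, ∀ t,
      w (t, q) = wig ex ey ez (a₁ q) (a₂ q) c₁ c₂ t ((h (t, q)).1 i₀) := by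
    intro q₀
    obtain ⟨c₁, h₁⟩ := lc₁ q₀
    obtain ⟨c₂, h₂⟩ := lc₂ q₀
    refine ⟨c₁, c₂, ?_⟩
    filter_upwards [h₁, h₂] with q e₁ e₂ t
    exact wig_congr _ _ _ _ _ _ _ _ _ _ _ e₁ e₂
  have hX : ContDiff ℝ (⊤ : ℕ∞) (fun x => (h x).1 i₀) := by fun_prop
  have hw : ContDiff ℝ (⊤ : ℕ∞) w := by
    rw [contDiff_iff_contDiffAt]
    rintro ⟨t₀, q₀⟩
    obtain ⟨c₁, c₂, hc⟩ := hwloc q₀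
    have he : w =ᶠ[nhds (t₀, q₀)] fun x =>
        wig ex ey ez (a₁ x.2) (a₂ x.2) c₁ c₂ x.1 ((h x).1 i₀) := by
      have : Filter.Tendsto (fun x : ℝ × E n => x.2) (nhds (t₀, q₀)) (nhds q₀) :=
        continuous_snd.tendsto (t₀, q₀)
      filter_upwards [this.eventually hc] with x hx
      exact hx x.1
    refine ContDiffAt.congr_of_eventuallyEq ?_ he
    apply ContDiff.contDiffAt
    unfold wig
    fun_prop
  have hg : ContDiff ℝ (⊤ : ℕ∞) (fun x => h x + w x) := hs.add hw
  refine ⟨fun x => h x + w x, ⟨hg, ?_⟩, ?_, ?_, ?_⟩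
  · intro t ht
    have hst : ContDiff ℝ (⊤ : ℕ∞) (fun q => h (t, q)) := by fun_prop
    refine isDiffeo_perturb (f := fun q => h (t, q)) (w := fun q => w (t, q)) (hh.2 t ht)
      (by fun_prop) fun q => ?_
    obtain ⟨c₁, c₂, hc⟩ := hwloc q
    have he : (fun q => w (t, q)) =ᶠ[nhds q] fun q =>
        wig ex ey ez (a₁ q) (a₂ q) c₁ c₂ t ((h (t, q)).1 i₀) := hc.mono fun q hq => hq t
    rw [he.fderiv_eq]
    set β := 1 + b t q with hβ
    have hβ1 : 1 ≤ β := by linarith [hb0 t q]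
    have hB : (0:ℝ) < 100 * β ^ 2 := by positivity
    have hpos : ∀ c : ℝ, c * (100 * β ^ 2) ≤ 1 → c ≤ 1 / (100 * β ^ 2) := fun c hc =>
      (le_div_iff₀ hB).2 hc
    have bh : ‖h (t, q)‖ ≤ β ∧ ‖fderiv ℝ (fun p => h (t, p)) q‖ ≤ β ∧
        ‖(fderiv ℝ (fun p => h (t, p)) q).inverse‖ ≤ β := by
      have n1 := norm_nonneg (h (t, q))
      have n2 := norm_nonneg (fderiv ℝ (fun p => h (t, p)) q)
      have n3 := norm_nonneg (fderiv ℝ (fun p => h (t, p)) q).inverse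
      have n4 := norm_nonneg (pathDeriv n h t q)
      have n5 := abs_nonneg (α₀ n (h (t, q)) (pathDeriv n h t q))
      simp only [hβ, b]
      refine ⟨?_, ?_, ?_⟩ <;> linarith
    have coord : ∀ p : E n, |p.1 i₀| ≤ ‖p‖ := fun p =>
      (norm_le_pi_norm p.1 i₀).trans (norm_fst_le p)
    have hXd : HasFDerivAt (fun q => (h (t, q)).1 i₀)
        (((ContinuousLinearMap.proj i₀ : (Fin n → ℝ) →L[ℝ] ℝ).comp
          (ContinuousLinearMap.fst ℝ (Fin n → ℝ) ((Fin n → ℝ) × ℝ))).comp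
            (fderiv ℝ (fun p => h (t, p)) q)) q :=
      ((ContinuousLinearMap.proj i₀ : (Fin n → ℝ) →L[ℝ] ℝ).comp
          (ContinuousLinearMap.fst ℝ (Fin n → ℝ) ((Fin n → ℝ) × ℝ))).hasFDerivAt.comp q
        (hst.differentiable (by simp) q).hasFDerivAt
    have key := wig_fderiv_bound ex ey ez hex hey hez a₁ a₂ (fun q => (h (t, q)).1 i₀) q
      (sa₁.differentiable (by simp) q) (sa₂.differentiable (by simp) q)
      hXd.differentiableAt c₁ c₂ t (1 / (100 * β ^ 2)) β
      (by rw [div_le_one hB]; nlinarith) hβ1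
      (by rw [abs_of_nonneg (na₁ q)]; exact hpos _ (ba₁ ⟨t, ht⟩ q))
      (by rw [abs_of_nonneg (na₂ q)]; exact hpos _ (ba₂ ⟨t, ht⟩ q))
      (hpos _ (da₁ ⟨t, ht⟩ q)) (hpos _ (da₂ ⟨t, ht⟩ q))
      ((coord _).trans bh.1)
      (by
        rw [hXd.fderiv]
        refine ContinuousLinearMap.opNorm_le_bound _ (by linarith) fun v => ?_
        refine (coord _).trans ((ContinuousLinearMap.le_opNorm _ _).trans ?_)
        exact mul_le_mul_of_nonneg_right bh.2.1 (norm_nonneg _))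
    calc _ ≤ (19 * (1 / (100 * β ^ 2)) * β) * β :=
          mul_le_mul key bh.2.2 (norm_nonneg _) (by positivity)
      _ = 19 / 100 := by field_simp
      _ ≤ 1 / 2 := by norm_num
  · intro t ht q
    have hhd : HasDerivAt (fun s => h (s, q)) (pathDeriv n h t q) t := by
      have : ContDiff ℝ (⊤ : ℕ∞) (fun s => h (s, q)) := by fun_prop
      exact (this.differentiable (by simp) t).hasDerivAt
    set V := pathDeriv n h t q with hV
    have hXd : HasDerivAt (fun s => (h (s, q)).1 i₀) (V.1 i₀) t :=
      ((ContinuousLinearMap.proj i₀ : (Fin n → ℝ) →L[ℝ] ℝ).comp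
          (ContinuousLinearMap.fst ℝ (Fin n → ℝ) ((Fin n → ℝ) × ℝ))).hasFDerivAt.comp_hasDerivAt t
        hhd
    have dlin : ∀ o : ℝ, HasDerivAt (fun s : ℝ => o * s) o t := fun o => by
      simpa using (hasDerivAt_id t).const_mul o
    have dcos : ∀ o : ℝ, HasDerivAt (fun s => Real.cos (o * s)) (-Real.sin (o * t) * o) t :=
      fun o => (dlin o).cos
    have dsin : ∀ o : ℝ, HasDerivAt (fun s => Real.sin (o * s)) (Real.cos (o * t) * o) t :=
      fun o => (dlin o).sin
    have dsin2 : ∀ o : ℝ, HasDerivAt (fun s => Real.sin (2 * (o * s)))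
        ((2 * Real.cos (o * t) ^ 2 - 1) * (2 * o)) t := fun o => by
      have := ((dlin o).const_mul 2).sin
      rwa [Real.cos_two_mul] at this
    have dU := (((dcos (ω₁ q)).sub_const 1).const_mul (a₁ q)).add
      (((dcos (ω₂ q)).sub_const 1).const_mul (a₂ q))
    have dW := ((dsin (ω₁ q)).const_mul (a₁ q)).add ((dsin (ω₂ q)).const_mul (a₂ q))
    have dZ := ((((hXd.mul dW).neg).sub
      ((((dsin2 (ω₁ q)).div_const 4).sub (dsin (ω₁ q))).const_mul (a₁ q ^ 2))).sub
      ((((dsin2 (ω₂ q)).div_const 4).sub (dsin (ω₂ q))).const_mul (a₂ q ^ 2))).sub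
      ((((dcos (ω₁ q)).sub_const 1).const_mul (a₁ q)).mul ((dsin (ω₂ q)).const_mul (a₂ q)))
    have dg := hhd.add (((dU.smul_const ex).add (dW.smul_const ey)).add (dZ.smul_const ez))
    have e : pathDeriv n (fun x => h x + w x) t q = _ := dg.deriv
    rw [e]
    simp only [w, wig]
    rw [alpha_wiggle]
    have hb : b t q = ‖h (t, q)‖ + ‖fderiv ℝ (fun p => h (t, p)) q‖ +
      ‖(fderiv ℝ (fun p => h (t, p)) q).inverse‖
        + ‖V‖ + |α₀ n (h (t, q)) V| := rfl
    have n1 := norm_nonneg (h (t, q))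
    have n2 := norm_nonneg (fderiv ℝ (fun p => h (t, p)) q)
    have n3 := norm_nonneg (fderiv ℝ (fun p => h (t, p)) q).inverse
    have n4 := norm_nonneg V
    have n5 := abs_nonneg (α₀ n (h (t, q)) V)
    have hx : |V.1 i₀| ≤ ‖V‖ := (norm_le_pi_norm V.1 i₀).trans (norm_fst_le V)
    have hy : |V.2.1 i₀| ≤ ‖V‖ :=
      (norm_le_pi_norm V.2.1 i₀).trans ((norm_fst_le V.2).trans (norm_snd_le V))
    have hgain := gain ⟨t, ht⟩ q
    simp only at hgain
    exact scalar_pos _ _ _ _ _ _ _ _ _ _ _ _ (b t q) (na₁ q) (na₂ q) (la₁ q) (la₂ q) (nω q) (hω q)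
      (Real.abs_cos_le_one _) (Real.abs_cos_le_one _) (Real.abs_sin_le_one _)
      (Real.abs_sin_le_one _) (by linarith) (by linarith) (by linarith)
      (by nlinarith [hb0 t q])
  · intro p
    simp only [w, wig_zero, add_zero, h0]
  · intro p
    simp only [w, wig_one _ _ _ _ _ _ _ _ (int₁ p) (int₂ p), add_zero, h1]
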